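/- Let δ be a (g,r,d)-sequence, and let g' ≥ g and d' > 0 be integers with g' − d' ≤ g − d and g' ≥ (r+1)(r+g'−d'). Then the sequence of length g' obtained from δ by appending g' − g terms equal to 0 is a (g',r,d')-sequence. -/

import Mathlib

/-!
Appending zeros only increases the number of occurrences of each value, while the required number
`r + g' - d'` is at most `r + g - d`. The ordering condition at an index inside `δ` involves only
a prefix of `δ`, and at an appended `0` it is vacuous, since no natural number is less than `0`.
-/

/-- A `(g,r,d)`-sequence: for integers `g, r, d > 0` with `g ≥ (r+1)(r+g−d)`, a finite
sequence `δ_1, …, δ_g` of integers with `0 ≤ δ_i ≤ r`, such that each integer `j` with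
`0 ≤ j ≤ r` occurs at least `r+g−d` times, and for each `i`, no integer strictly less
than `δ_i` occurs among `δ_1,…,δ_i` strictly fewer times than `δ_i` does. -/
def IsGRDSeq (g r d : ℕ) (δ : List ℕ) : Prop :=
  0 < g ∧ 0 < r ∧ 0 < d ∧
  ((r : ℤ) + 1) * ((r : ℤ) + (g : ℤ) - (d : ℤ)) ≤ (g : ℤ) ∧
  δ.length = g ∧
  (∀ x ∈ δ, x ≤ r) ∧
  (∀ j : ℕ, j ≤ r → (r : ℤ) + (g : ℤ) - (d : ℤ) ≤ (δ.count j : ℤ)) ∧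
  (∀ i : ℕ, ∀ hi : i < δ.length, ∀ j' : ℕ, j' < δ[i] →
    (δ.take (i + 1)).count (δ[i]) ≤ (δ.take (i + 1)).count j')

/-- `aVal δ i j` is the quantity `a^i_j = j + (i−1) − #{i' < i : δ_{i'} = j}`
(indices `i` starting from 1), satisfying `a^1_j = j` and `a^{i+1}_j = a^i_j + 1`
if `j ≠ δ_i`, `a^{i+1}_j = a^i_j` if `j = δ_i`. -/
def aVal (δ : List ℕ) (i j : ℕ) : ℤ :=
  (j : ℤ) + ((i : ℤ) - 1) - ((δ.take (i - 1)).count j : ℤ)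

/-- `bVal δ d i j` is `b^i_j = d − a^i_j` if `j = δ_i` and `d − 1 − a^i_j` otherwise. -/
def bVal (δ : List ℕ) (d i j : ℕ) : ℤ :=
  if δ.getD (i - 1) (j + 1) = j then (d : ℤ) - aVal δ i j else (d : ℤ) - 1 - aVal δ i j

/-- The pair `(w', w)` of tuples `(c'_2,…,c'_g)`, `(c_2,…,c_g)` is steady if there is an
index `i` with `c'_j − c_j ≤ 0` for `j ≥ i` and `c'_j − c_j ≥ 0` for `j < i`. -/
def Steady (g : ℕ) (c' c : ℕ → ℤ) : Prop :=
  ∃ i : ℕ, ∀ j : ℕ, 2 ≤ j → j ≤ g →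
    (i ≤ j → c' j - c j ≤ 0) ∧ (j < i → 0 ≤ c' j - c j)

/-- A tuple `w = (c_2,…,c_g)` is unimaginative (for a given `m`) if
`c_{i+1} − c_i ≥ m` for `i = 2,…,g−1`. -/
def Unimaginative (g m : ℕ) (c : ℕ → ℤ) : Prop :=
  ∀ i : ℕ, 2 ≤ i → i ≤ g - 1 → (m : ℤ) ≤ c (i + 1) - c i

open scoped Classical in
/-- `eps g c' c i` is `ε^i_{w',w}`: it is `1` when
`Σ_{j=i+1}^{g} (c'_j − c_j) = min_{1 ≤ i' ≤ g} Σ_{j=i'+1}^{g} (c'_j − c_j)`,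
and `0` otherwise. -/
noncomputable def eps (g : ℕ) (c' c : ℕ → ℤ) (i : ℕ) : ℕ :=
  if ∀ i' ∈ Finset.Icc 1 g,
      (∑ j ∈ Finset.Icc (i + 1) g, (c' j - c j)) ≤ ∑ j ∈ Finset.Icc (i' + 1) g, (c' j - c j)
  then 1 else 0


theorem stmt_10 (g r d g' d' : ℕ) (δ : List ℕ) (h : IsGRDSeq g r d δ)
    (hg : g ≤ g') (hd' : 0 < d')
    (hgd : (g' : ℤ) - (d' : ℤ) ≤ (g : ℤ) - (d : ℤ))
    (hrho : ((r : ℤ) + 1) * ((r : ℤ) + (g' : ℤ) - (d' : ℤ)) ≤ (g' : ℤ)) :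
    IsGRDSeq g' r d' (δ ++ List.replicate (g' - g) 0) := by
  obtain ⟨h0, hr, -, -, hlen, hle, hcount, hord⟩ := h
  refine ⟨by omega, hr, hd', hrho, by simp; omega, ?_, ?_, ?_⟩
  · intro x hx
    rcases List.mem_append.1 hx with hx | hx
    · exact hle x hx
    · have := List.eq_of_mem_replicate hx
      omega
  · intro j hj
    have := hcount j hj
    rw [List.count_append]
    push_cast
    omega
  · intro i hi j' hj'
    by_cases hiδ : i < δ.length
    · rw [List.getElem_append_left hiδ] at hj' ⊢
      rw [List.take_append_of_le_length (by omega)]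
      exact hord i hiδ j' hj'
    · rw [List.getElem_append_right (by omega), List.getElem_replicate] at hj'
      omega
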